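/- (Corollary of Theorems 3 and 4: local 2-FWL has stronger link discriminating power than 1-WL.) (i) For every label set Σ, all labeled graphs G = (V,E,l) and G' = (V',E',l') over Σ, and all target links (p,q) in G and (p',q') in G': if (p,q) and (p',q') are 2-FWL_L-indistinguishable, then they are 1-WL-indistinguishable. (ii) There exist unlabeled graphs G, G' and target links (p,q) in G and (p',q') in G' that are 1-WL-indistinguishable but not 2-FWL_L-indistinguishable. -/

import Mathlib

open scoped Classical

universe u v

/-- The common 1-WL color type over label set `σ`:
`C 0 = σ`, `C (t+1) = C t × Multiset (C t)`. -/
def WL1Color (σ : Type u) : ℕ → Type u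
  | 0 => σ
  | t + 1 => WL1Color σ t × Multiset (WL1Color σ t)

/-- The 1-WL coloring of a labeled graph `(G, l)`:
`c¹⁰(v) = l v`, `c¹ᵗ⁺¹(v) = (c¹ᵗ(v), {{c¹ᵗ(u) : u ∈ N(v)}})`. -/
noncomputable def wl1 {σ : Type u} {V : Type v} [Fintype V] (G : SimpleGraph V)
    (l : V → σ) : (t : ℕ) → V → WL1Color σ t
  | 0 => l
  | t + 1 => fun v => (wl1 G l t v, (G.neighborFinset v).val.map (wl1 G l t))

/-- The type of initial pair colors over label set `σ`. -/
def PairColor0 (σ : Type u) : Type u := σ × σ × Bool × Bool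

/-- Initial pair color `c⁰(p,q) = (l p, l q, 1_{(p,q)∈E}, 1_{p=q})`. -/
noncomputable def pairInit {σ : Type u} {V : Type v} (G : SimpleGraph V) (l : V → σ)
    (e : V × V) : PairColor0 σ :=
  (l e.1, l e.2, decide (G.Adj e.1 e.2), decide (e.1 = e.2))

/-- The common (plain/local) 2-WL pair color type over label set `σ`. -/
def WL2Color (σ : Type u) : ℕ → Type u
  | 0 => PairColor0 σ
  | t + 1 => WL2Color σ t × Multiset (WL2Color σ t) × Multiset (WL2Color σ t)

/-- The plain 2-WL coloring:
`c₂ᵗ⁺¹(p,q) = (c₂ᵗ(p,q), {{c₂ᵗ(u,q) : u ∈ V}}, {{c₂ᵗ(p,v) : v ∈ V}})`. -/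
noncomputable def wl2 {σ : Type u} {V : Type v} [Fintype V] (G : SimpleGraph V)
    (l : V → σ) : (t : ℕ) → V × V → WL2Color σ t
  | 0 => pairInit G l
  | t + 1 => fun e =>
      (wl2 G l t e,
        Finset.univ.val.map (fun u => wl2 G l t (u, e.2)),
        Finset.univ.val.map (fun v => wl2 G l t (e.1, v)))

/-- The local 2-WL (2-WL_L) coloring:
`cₗᵗ⁺¹(p,q) = (cₗᵗ(p,q), {{cₗᵗ(u,q) : (u,q) ∈ E}}, {{cₗᵗ(p,v) : (p,v) ∈ E}})`. -/
noncomputable def wl2L {σ : Type u} {V : Type v} [Fintype V] (G : SimpleGraph V)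
    (l : V → σ) : (t : ℕ) → V × V → WL2Color σ t
  | 0 => pairInit G l
  | t + 1 => fun e =>
      (wl2L G l t e,
        (Finset.univ.filter (fun u => G.Adj u e.2)).val.map (fun u => wl2L G l t (u, e.2)),
        (Finset.univ.filter (fun v => G.Adj e.1 v)).val.map (fun v => wl2L G l t (e.1, v)))

/-- The common (plain/local) 2-FWL pair color type over label set `σ`. -/
def FWLColor (σ : Type u) : ℕ → Type u
  | 0 => PairColor0 σ
  | t + 1 => FWLColor σ t × Multiset (FWLColor σ t × FWLColor σ t)

/-- The 2-FWL coloring: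
`c_Fᵗ⁺¹(p,q) = (c_Fᵗ(p,q), {{(c_Fᵗ(u,q), c_Fᵗ(p,u)) : u ∈ V}})`. -/
noncomputable def fwl2 {σ : Type u} {V : Type v} [Fintype V] (G : SimpleGraph V)
    (l : V → σ) : (t : ℕ) → V × V → FWLColor σ t
  | 0 => pairInit G l
  | t + 1 => fun e =>
      (fwl2 G l t e,
        Finset.univ.val.map (fun u => (fwl2 G l t (u, e.2), fwl2 G l t (e.1, u))))

/-- The local 2-FWL (2-FWL_L) coloring:
`c_FLᵗ⁺¹(p,q) = (c_FLᵗ(p,q), {{(c_FLᵗ(u,q), c_FLᵗ(p,u)) : (u,q) ∈ E or (p,u) ∈ E}})`. -/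
noncomputable def fwl2L {σ : Type u} {V : Type v} [Fintype V] (G : SimpleGraph V)
    (l : V → σ) : (t : ℕ) → V × V → FWLColor σ t
  | 0 => pairInit G l
  | t + 1 => fun e =>
      (fwl2L G l t e,
        (Finset.univ.filter (fun u => G.Adj u e.2 ∨ G.Adj e.1 u)).val.map
          (fun u => (fwl2L G l t (u, e.2), fwl2L G l t (e.1, u))))

/-- A target link: an ordered pair of distinct, non-adjacent vertices. -/
def IsTargetLink {V : Type v} (G : SimpleGraph V) (e : V × V) : Prop :=
  e.1 ≠ e.2 ∧ ¬ G.Adj e.1 e.2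

/-- `(p,q)` in `(G,l)` and `(p',q')` in `(G',l')` are 1-WL-indistinguishable. -/
noncomputable def WL1Indist {σ : Type u} {V V' : Type v} [Fintype V] [Fintype V']
    (G : SimpleGraph V) (l : V → σ) (G' : SimpleGraph V') (l' : V' → σ)
    (e : V × V) (e' : V' × V') : Prop :=
  ∀ t : ℕ, wl1 G l t e.1 = wl1 G' l' t e'.1 ∧ wl1 G l t e.2 = wl1 G' l' t e'.2

/-- 2-WL-indistinguishability. -/
noncomputable def WL2Indist {σ : Type u} {V V' : Type v} [Fintype V] [Fintype V']
    (G : SimpleGraph V) (l : V → σ) (G' : SimpleGraph V') (l' : V' → σ)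
    (e : V × V) (e' : V' × V') : Prop :=
  ∀ t : ℕ, wl2 G l t e = wl2 G' l' t e'

/-- Local 2-WL (2-WL_L) indistinguishability. -/
noncomputable def WL2LIndist {σ : Type u} {V V' : Type v} [Fintype V] [Fintype V']
    (G : SimpleGraph V) (l : V → σ) (G' : SimpleGraph V') (l' : V' → σ)
    (e : V × V) (e' : V' × V') : Prop :=
  ∀ t : ℕ, wl2L G l t e = wl2L G' l' t e'

/-- 2-FWL-indistinguishability. -/
noncomputable def FWL2Indist {σ : Type u} {V V' : Type v} [Fintype V] [Fintype V']
    (G : SimpleGraph V) (l : V → σ) (G' : SimpleGraph V') (l' : V' → σ)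
    (e : V × V) (e' : V' × V') : Prop :=
  ∀ t : ℕ, fwl2 G l t e = fwl2 G' l' t e'

/-- Local 2-FWL (2-FWL_L) indistinguishability. -/
noncomputable def FWL2LIndist {σ : Type u} {V V' : Type v} [Fintype V] [Fintype V']
    (G : SimpleGraph V) (l : V → σ) (G' : SimpleGraph V') (l' : V' → σ)
    (e : V × V) (e' : V' × V') : Prop :=
  ∀ t : ℕ, fwl2L G l t e = fwl2L G' l' t e'

/-- The 0/1 labeling trick: augment the labeling with indicator of membership in `{p, q}`. -/
noncomputable def label01 {σ : Type u} {V : Type v} (l : V → σ) (e : V × V) :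
    V → σ × Bool :=
  fun v => (l v, decide (v = e.1 ∨ v = e.2))

/-- 1-WL-with-0/1-labeling indistinguishability of target links. -/
noncomputable def WL1LabelIndist {σ : Type u} {V V' : Type v} [Fintype V] [Fintype V']
    (G : SimpleGraph V) (l : V → σ) (G' : SimpleGraph V') (l' : V' → σ)
    (e : V × V) (e' : V' × V') : Prop :=
  WL1Indist G (label01 l e) G' (label01 l' e') e e'

/-- The number of common neighbors of `p` and `q` in `G`. -/
noncomputable def commonNbrCount {V : Type v} [Fintype V] (G : SimpleGraph V)
    (e : V × V) : ℕ :=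
  (G.neighborFinset e.1 ∩ G.neighborFinset e.2).card

/-!
A 2-FWL_L color of `(p, q)` at round `t` determines the 1-WL color of `p` at round `t`: the vertices
`u` refining the color of `(p, q)` include all neighbors of `p`, and those are recognized by the
adjacency bit that the color of `(p, u)` keeps from round `0`. The color of `(q, p)` is a function
of that of `(p, q)`, so the 1-WL color of `q` is determined too.

Conversely, 1-WL is constant on an unlabeled regular graph, while a single round of 2-FWL_L already
counts common neighbors; in the 6-cycle this separates pairs at distance two from pairs at
distance three.
-/

section

variable {σ : Type u}

/-- The adjacency indicator of the underlying pair, carried along from the initial color; it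
singles out the neighbors of `p` and of `q` in the refining multiset. -/
def FWLColor.adjBit : {t : ℕ} → FWLColor σ t → Bool
  | 0, c => c.2.2.1
  | _ + 1, c => adjBit c.1

/-- The 1-WL color of the first vertex `p` of a pair `(p, q)`, decoded from its 2-FWL_L color.
In an entry `x` of the refining multiset, `x.1` colors `(u, q)` and `x.2` colors `(p, u)`. -/
def FWLColor.fstWL1 : {t : ℕ} → FWLColor σ t → WL1Color σ t
  | 0, c => c.1
  | _ + 1, c => (fstWL1 c.1, (c.2.filter fun x => x.2.adjBit).map fun x => fstWL1 x.1)

/-- The color of the reversed pair `(q, p)`, decoded from that of `(p, q)`. -/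
def FWLColor.swap : {t : ℕ} → FWLColor σ t → FWLColor σ t
  | 0, c => (c.2.1, c.1, c.2.2)
  | _ + 1, c => (swap c.1, c.2.map fun x => (swap x.2, swap x.1))

/-- The number of common neighbors of the underlying pair, decoded from its 2-FWL_L color after at
least one round. -/
def FWLColor.commonNbrCount {t : ℕ} (c : FWLColor σ (t + 1)) : ℕ :=
  (c.2.filter fun x => x.2.adjBit ∧ x.1.adjBit).card

/-- The 1-WL color at round `t` shared by all vertices of all `d`-regular graphs whose vertices are
all labeled `a`. -/
def WL1Color.regular (a : σ) (d : ℕ) : (t : ℕ) → WL1Color σ t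
  | 0 => a
  | t + 1 => (regular a d t, Multiset.replicate d (regular a d t))

section Coloring

variable {V : Type v} [Fintype V] (G : SimpleGraph V) (l : V → σ)

theorem adjBit_fwl2L (t : ℕ) (e : V × V) : (fwl2L G l t e).adjBit ↔ G.Adj e.1 e.2 := by
  induction t with
  | zero => exact decide_eq_true_iff
  | succ _ ih => exact ih

theorem fstWL1_fwl2L (t : ℕ) (e : V × V) : (fwl2L G l t e).fstWL1 = wl1 G l t e.1 := by
  induction t generalizing e with
  | zero => rfl
  | succ t ih =>
    refine Prod.ext (ih e) ?_
    have filter_adj : (Finset.univ.filter fun u => G.Adj u e.2 ∨ G.Adj e.1 u).filter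
        (fun u => G.Adj e.1 u) = G.neighborFinset e.1 := by
      ext u
      simp +contextual
    simp only [FWLColor.fstWL1, fwl2L, wl1, Multiset.filter_map, Multiset.map_map,
      Function.comp_def, ih, adjBit_fwl2L, ← Finset.filter_val, filter_adj]

theorem fwl2L_swap (t : ℕ) (e : V × V) : fwl2L G l t e.swap = (fwl2L G l t e).swap := by
  induction t generalizing e with
  | zero => exact Prod.ext rfl <| Prod.ext rfl <|
      Prod.ext (decide_eq_decide.2 (G.adj_comm _ _)) (decide_eq_decide.2 eq_comm)
  | succ t ih =>
    refine Prod.ext (ih e) ?_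
    have refining_swap : (Finset.univ.filter fun u => G.Adj u e.1 ∨ G.Adj e.2 u) =
        Finset.univ.filter fun u => G.Adj u e.2 ∨ G.Adj e.1 u := by
      ext u
      simp only [Finset.mem_filter_univ, G.adj_comm u, or_comm]
    simp only [FWLColor.swap, fwl2L, Multiset.map_map, Function.comp_def, ← ih, Prod.swap_prod_mk,
      Prod.fst_swap, Prod.snd_swap, refining_swap]

theorem commonNbrCount_fwl2L (t : ℕ) (e : V × V) :
    (fwl2L G l (t + 1) e).commonNbrCount = commonNbrCount G e := by
  have filter_adj : (Finset.univ.filter fun u => G.Adj u e.2 ∨ G.Adj e.1 u).filter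
      (fun u => G.Adj e.1 u ∧ G.Adj u e.2) = G.neighborFinset e.1 ∩ G.neighborFinset e.2 := by
    ext u
    simp +contextual [G.adj_comm u]
  simp only [FWLColor.commonNbrCount, commonNbrCount, fwl2L, Multiset.filter_map,
    Multiset.card_map, Function.comp_def, adjBit_fwl2L, ← Finset.filter_val, filter_adj,
    Finset.card_val]

theorem commonNbrCount_pos_iff (e : V × V) :
    0 < commonNbrCount G e ↔ ∃ u, G.Adj e.1 u ∧ G.Adj e.2 u := by
  simp only [commonNbrCount, Finset.card_pos, Finset.Nonempty, Finset.mem_inter,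
    SimpleGraph.mem_neighborFinset]

variable {G} in
theorem wl1_eq_regular [G.LocallyFinite] {d : ℕ} (hG : G.IsRegularOfDegree d) (a : σ) (t : ℕ)
    (v : V) : wl1 G (fun _ => a) t v = WL1Color.regular a d t := by
  induction t generalizing v with
  | zero => rfl
  | succ t ih =>
    refine Prod.ext (ih v) (Multiset.eq_replicate.2 ⟨?_, ?_⟩)
    · rw [← hG v, ← G.card_neighborFinset_eq_degree, wl1, Multiset.card_map, Finset.card_val]
      congr!
    · simp only [wl1, Multiset.mem_map]
      rintro _ ⟨u, -, rfl⟩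
      exact ih u

end Coloring

section Indistinguishability

variable {V V' : Type v} [Fintype V] [Fintype V'] {G : SimpleGraph V} {l : V → σ}
  {G' : SimpleGraph V'} {l' : V' → σ} {e : V × V} {e' : V' × V'}

theorem FWL2LIndist.swap (h : FWL2LIndist G l G' l' e e') :
    FWL2LIndist G l G' l' e.swap e'.swap := fun t => by
  rw [fwl2L_swap, h t, fwl2L_swap]

theorem FWL2LIndist.wl1_fst_eq (h : FWL2LIndist G l G' l' e e') (t : ℕ) :
    wl1 G l t e.1 = wl1 G' l' t e'.1 := by
  rw [← fstWL1_fwl2L, h t, fstWL1_fwl2L]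

theorem FWL2LIndist.wl1Indist (h : FWL2LIndist G l G' l' e e') : WL1Indist G l G' l' e e' :=
  fun t => ⟨h.wl1_fst_eq t, h.swap.wl1_fst_eq t⟩

theorem FWL2LIndist.commonNbrCount_eq (h : FWL2LIndist G l G' l' e e') :
    commonNbrCount G e = commonNbrCount G' e' := by
  rw [← commonNbrCount_fwl2L G l 0, h 1, commonNbrCount_fwl2L]

theorem wl1Indist_of_isRegularOfDegree [G.LocallyFinite] [G'.LocallyFinite] {d : ℕ}
    (hG : G.IsRegularOfDegree d) (hG' : G'.IsRegularOfDegree d) (a : σ) (e : V × V)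
    (e' : V' × V') : WL1Indist G (fun _ => a) G' (fun _ => a) e e' := fun t => by
  simp only [wl1_eq_regular hG, wl1_eq_regular hG', and_self]

end Indistinguishability

theorem not_fwl2LIndist_cycleGraph_six (l l' : Fin 6 → σ) :
    ¬ FWL2LIndist (SimpleGraph.cycleGraph 6) l (SimpleGraph.cycleGraph 6) l' (0, 2) (0, 3) := by
  intro h
  have common_two : 0 < commonNbrCount (SimpleGraph.cycleGraph 6) (0, 2) :=
    (commonNbrCount_pos_iff _ _).2 ⟨1, by decide⟩
  have no_common_three : ¬ 0 < commonNbrCount (SimpleGraph.cycleGraph 6) (0, 3) := by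
    rw [commonNbrCount_pos_iff]
    decide
  exact no_common_three (h.commonNbrCount_eq ▸ common_two)

end

theorem local_fwl2_stronger_than_wl1_general :
    (∀ (σ : Type u) (V V' : Type v) [Fintype V] [Fintype V']
        (G : SimpleGraph V) (l : V → σ) (G' : SimpleGraph V') (l' : V' → σ)
        (e : V × V) (e' : V' × V'),
        FWL2LIndist G l G' l' e e' → WL1Indist G l G' l' e e') ∧
    (∃ (n : ℕ) (G : SimpleGraph (Fin n)) (e e' : Fin n × Fin n),
        IsTargetLink G e ∧ IsTargetLink G e' ∧
        WL1Indist G (fun _ => ()) G (fun _ => ()) e e' ∧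
        ¬ FWL2LIndist G (fun _ => ()) G (fun _ => ()) e e') := by
  have regular : (SimpleGraph.cycleGraph 6).IsRegularOfDegree 2 :=
    fun _ => SimpleGraph.cycleGraph_degree_three_le
  exact ⟨fun _ _ _ _ _ _ _ _ _ _ _ h => h.wl1Indist,
    6, SimpleGraph.cycleGraph 6, (0, 2), (0, 3), ⟨by decide, by decide⟩, ⟨by decide, by decide⟩,
    wl1Indist_of_isRegularOfDegree regular regular () _ _, not_fwl2LIndist_cycleGraph_six _ _⟩

/-- Corollary of Theorems 3 and 4: local 2-FWL has stronger link discriminating power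
than 1-WL. -/
theorem local_fwl2_stronger_than_wl1 :
    (∀ (σ : Type u) (V V' : Type v) [Fintype V] [Fintype V']
        (G : SimpleGraph V) (l : V → σ) (G' : SimpleGraph V') (l' : V' → σ)
        (e : V × V) (e' : V' × V'),
        IsTargetLink G e → IsTargetLink G' e' →
        FWL2LIndist G l G' l' e e' → WL1Indist G l G' l' e e') ∧
    (∃ (n n' : ℕ) (G : SimpleGraph (Fin n)) (G' : SimpleGraph (Fin n'))
        (e : Fin n × Fin n) (e' : Fin n' × Fin n'),
        IsTargetLink G e ∧ IsTargetLink G' e' ∧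
        WL1Indist G (fun _ => ()) G' (fun _ => ()) e e' ∧
        ¬ FWL2LIndist G (fun _ => ()) G' (fun _ => ()) e e') := by
  obtain ⟨indist, n, G, e, e', separation⟩ := local_fwl2_stronger_than_wl1_general
  exact ⟨fun σ V V' _ _ G l G' l' e e' _ _ => indist σ V V' G l G' l' e e',
    n, n, G, G, e, e', separation⟩
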